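/- Let d = 2. The numbers a(n,0) of loopless linear diagrams satisfy the second-order recurrence a(n+1,0) = (2n+1) · a(n,0) + a(n−1,0) for every integer n ≥ 1, with initial values a(0,0) = 1 and a(1,0) = 0. -/

import Mathlib

/-- A generalized linear diagram on points `1,…,N` whose blocks all have size `d`:
a partition of `{1,…,N}` into blocks of size `d`. -/
def IsLinearDiagram (N d : ℕ) (P : Finset (Finset ℕ)) : Prop :=
  (∀ b ∈ P, b.card = d) ∧ (∀ b ∈ P, ∀ x ∈ b, x ∈ Finset.Icc 1 N) ∧
    ∀ x ∈ Finset.Icc 1 N, ∃! b : Finset ℕ, b ∈ P ∧ x ∈ b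

/-- The number of loops of a linear diagram on points `1,…,N`: indices `i` with
`1 ≤ i ≤ N - 1` such that `i` and `i + 1` lie in the same block. -/
noncomputable def linLoops (N : ℕ) (P : Finset (Finset ℕ)) : ℕ :=
  Set.ncard {i : ℕ | 1 ≤ i ∧ i + 1 ≤ N ∧ ∃ b ∈ P, i ∈ b ∧ i + 1 ∈ b}

/-- `numA d n k` : the number of generalized linear diagrams of order `(n,d)`
with exactly `k` loops. -/
noncomputable def numA (d n k : ℕ) : ℕ :=
  Set.ncard {P : Finset (Finset ℕ) | IsLinearDiagram (n * d) d P ∧ linLoops (n * d) P = k}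

/-- `numA` with an integer loop index, zero for negative indices. -/
noncomputable def numAZ (d n : ℕ) (k : ℤ) : ℕ :=
  if 0 ≤ k then numA d n k.toNat else 0

/-- Binomial coefficient with integer arguments: `0` when `y < 0` or `y > x`. -/
def iChoose (x y : ℤ) : ℕ :=
  if 0 ≤ y ∧ y ≤ x then x.toNat.choose y.toNat else 0

/-- A generalized chord diagram on `ZMod N` whose blocks all have size `d`:
a partition of `ZMod N` into blocks of size `d`. -/
def IsChordDiagram (N d : ℕ) (P : Finset (Finset (ZMod N))) : Prop :=
  (∀ b ∈ P, b.card = d) ∧ ∀ x : ZMod N, ∃! b : Finset (ZMod N), b ∈ P ∧ x ∈ b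

/-- A chord diagram is loopless if no residues `i`, `i+1` lie in the same block. -/
def ChordLoopless (N : ℕ) (P : Finset (Finset (ZMod N))) : Prop :=
  ∀ i : ZMod N, ∀ b ∈ P, i ∈ b → i + 1 ∈ b → False

/-- `numB d n` : the number of loopless generalized chord diagrams of order `(n,d)`. -/
noncomputable def numB (d n : ℕ) : ℕ :=
  Set.ncard {P : Finset (Finset (ZMod (n * d))) |
    IsChordDiagram (n * d) d P ∧ ChordLoopless (n * d) P}

/-- The shift `i ↦ i + v` modulo `M`, on the representatives `1,…,M`. -/
def shiftMod (M v i : ℕ) : ℕ := if i + v ≤ M then i + v else i + v - M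

/-- An `m`-symmetric linear diagram with sector size `v` and blocks of size `d`:
a partition of `{1,…,m·v}` into blocks of size `d` invariant under the shift by `v`
modulo `m·v`. -/
def IsMSymLinear (d m v : ℕ) (P : Finset (Finset ℕ)) : Prop :=
  IsLinearDiagram (m * v) d P ∧ ∀ b ∈ P, b.image (shiftMod (m * v) v) ∈ P

/-- The number of loops lying in sector `s` (sectors numbered from `0`):
indices `i` with `s·v + 1 ≤ i ≤ (s+1)·v - 1` such that `i` and `i + 1` lie
in the same block. -/
noncomputable def sectorLoops (v : ℕ) (P : Finset (Finset ℕ)) (s : ℕ) : ℕ :=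
  Set.ncard {i : ℕ | s * v + 1 ≤ i ∧ i + 1 ≤ (s + 1) * v ∧ ∃ b ∈ P, i ∈ b ∧ i + 1 ∈ b}

/-- `numAtil d m v k` : the number of `m`-symmetric linear diagrams with sector size `v`,
blocks of size `d`, and exactly `k` loops in each sector (`ã(v,k;m,d)`). -/
noncomputable def numAtil (d m v k : ℕ) : ℕ :=
  Set.ncard {P : Finset (Finset ℕ) |
    IsMSymLinear d m v P ∧ ∀ s < m, sectorLoops v P s = k}

/-!
A loopless matching of `N + 2 = 2n + 2` points arises in exactly one way from a matching of `N`
points by joining a new last point to a new point `p`; since `p` is not the last but one point,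
there are `N` positions for it, and it has to break every loop of the smaller matching. That
matching is therefore loopless with `p` arbitrary, or has a single loop which determines `p`, so
that `a(n+1,0) = 2n · a(n,0) + a(n,1)`. In the same way a matching with exactly one loop arises by
inserting that loop into a smaller matching, now at one of `N + 1` positions, and
`a(n+1,1) = (2n+1) · a(n,0) + a(n,1)`. Subtracting gives `a(n+1,1) = a(n+1,0) + a(n,0)`, and
eliminating the one-loop numbers gives the recurrence.
-/

open Finset

section UniformPartition

variable {α β : Type*} {S : Finset α} {d : ℕ} {P : Finset (Finset α)} {e : α ↪ β}

/-- Partitions of a finite set `S` into blocks of size `d`, given by their set of blocks; the case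
`S = {1, …, N}` is `IsLinearDiagram N d`. -/
def IsUniformPartition (S : Finset α) (d : ℕ) (P : Finset (Finset α)) : Prop :=
  (∀ b ∈ P, #b = d) ∧ (∀ b ∈ P, b ⊆ S) ∧ ∀ x ∈ S, ∃! b : Finset α, b ∈ P ∧ x ∈ b

theorem IsUniformPartition.eq_of_mem (hP : IsUniformPartition S d P) {b c : Finset α} {x : α}
    (hb : b ∈ P) (hc : c ∈ P) (hxb : x ∈ b) (hxc : x ∈ c) : b = c :=
  (hP.2.2 x (hP.2.1 b hb hxb)).unique ⟨hb, hxb⟩ ⟨hc, hxc⟩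

theorem IsUniformPartition.pair_mem [DecidableEq α] (hP : IsUniformPartition S 2 P) {b : Finset α}
    {x y : α} (hb : b ∈ P) (hx : x ∈ b) (hy : y ∈ b) (hxy : x ≠ y) : {x, y} ∈ P := by
  have hsub : {x, y} ⊆ b := insert_subset hx (singleton_subset_iff.2 hy)
  rwa [eq_of_subset_of_card_le hsub (by rw [hP.1 b hb, card_pair hxy])]

theorem IsUniformPartition.exists_pair_mem [DecidableEq α] (hP : IsUniformPartition S 2 P) {x : α}
    (hx : x ∈ S) : ∃ y ∈ S, y ≠ x ∧ {y, x} ∈ P := by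
  obtain ⟨b, ⟨hb, hxb⟩, -⟩ := hP.2.2 x hx
  obtain ⟨y, hyb, hyx⟩ := exists_mem_ne (by rw [hP.1 b hb]; exact one_lt_two) x
  exact ⟨y, hP.2.1 b hb hyb, hyx, hP.pair_mem hb hyb hxb hyx⟩

theorem finite_setOf_isUniformPartition (S : Finset α) (d : ℕ) :
    {P | IsUniformPartition S d P}.Finite :=
  S.powerset.powerset.finite_toSet.subset fun _ hP =>
    mem_powerset.2 fun b hb => mem_powerset.2 (hP.2.1 b hb)

theorem isUniformPartition_empty_iff (hd : d ≠ 0) :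
    IsUniformPartition (∅ : Finset α) d P ↔ P = ∅ := by
  refine ⟨fun ⟨hcard, hsub, _⟩ => eq_empty_of_forall_notMem fun b hb => hd ?_, ?_⟩
  · rw [← hcard b hb, subset_empty.1 (hsub b hb), card_empty]
  · rintro rfl
    simp [IsUniformPartition]

/-- The image of a family of blocks under an embedding of the underlying points. -/
def mapBlocks (e : α ↪ β) : Finset (Finset α) ↪ Finset (Finset β) :=
  (mapEmbedding (mapEmbedding e).toEmbedding).toEmbedding

theorem mem_mapBlocks {b : Finset β} : b ∈ mapBlocks e P ↔ ∃ c ∈ P, c.map e = b := by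
  simp [mapBlocks]

theorem map_mem_mapBlocks {c : Finset α} : c.map e ∈ mapBlocks e P ↔ c ∈ P := by
  simp [mem_mapBlocks]

theorem forall_mem_mapBlocks {p : Finset β → Prop} :
    (∀ b ∈ mapBlocks e P, p b) ↔ ∀ c ∈ P, p (c.map e) := by
  simp [mem_mapBlocks]

theorem exists_mapBlocks_eq {Q : Finset (Finset β)} (hQ : ∀ b ∈ Q, b ⊆ S.map e) :
    ∃ P, mapBlocks e P = Q := by
  have hQ' : Q ⊆ S.powerset.map (mapEmbedding e).toEmbedding := fun b hb => by
    obtain ⟨c, hc, rfl⟩ := subset_map_iff.1 (hQ b hb)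
    exact mem_map_of_mem _ (mem_powerset.2 hc)
  obtain ⟨P, -, rfl⟩ := subset_map_iff.1 hQ'
  exact ⟨P, rfl⟩

theorem existsUnique_mem_mapBlocks_iff {x : α} :
    (∃! b, b ∈ mapBlocks e P ∧ e x ∈ b) ↔ ∃! c, c ∈ P ∧ x ∈ c := by
  constructor
  · rintro ⟨b, ⟨hb, hx⟩, hu⟩
    obtain ⟨c, hc, rfl⟩ := mem_mapBlocks.1 hb
    refine ⟨c, ⟨hc, by simpa using hx⟩, fun c' hc' => map_injective e (hu _ ?_)⟩
    simpa [map_mem_mapBlocks] using hc'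
  · rintro ⟨c, ⟨hc, hx⟩, hu⟩
    refine ⟨c.map e, by simpa [map_mem_mapBlocks] using ⟨hc, hx⟩, fun b hb => ?_⟩
    obtain ⟨c', hc', rfl⟩ := mem_mapBlocks.1 hb.1
    rw [hu c' ⟨hc', by simpa using hb.2⟩]

theorem isUniformPartition_mapBlocks_iff :
    IsUniformPartition (S.map e) d (mapBlocks e P) ↔ IsUniformPartition S d P := by
  simp only [IsUniformPartition, forall_mem_mapBlocks, forall_mem_map, card_map, map_subset_map,
    existsUnique_mem_mapBlocks_iff]

theorem IsUniformPartition.insert [DecidableEq α] {b : Finset α} (hP : IsUniformPartition S d P)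
    (hbd : #b = d) (hbS : Disjoint b S) : IsUniformPartition (b ∪ S) d (insert b P) := by
  obtain ⟨hcard, hsub, huniq⟩ := hP
  refine ⟨forall_mem_insert _ _ _ |>.2 ⟨hbd, hcard⟩, forall_mem_insert _ _ _ |>.2
    ⟨subset_union_left, fun c hc => (hsub c hc).trans subset_union_right⟩, fun x hx => ?_⟩
  rcases mem_union.1 hx with hxb | hxS
  · refine ⟨b, ⟨mem_insert_self b P, hxb⟩, fun c ⟨hc, hxc⟩ => ?_⟩
    refine (mem_insert.1 hc).resolve_right fun hcP => ?_
    exact disjoint_left.1 hbS hxb (hsub c hcP hxc)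
  · obtain ⟨c, ⟨hc, hxc⟩, hu⟩ := huniq x hxS
    refine ⟨c, ⟨mem_insert_of_mem hc, hxc⟩, fun c' ⟨hc', hxc'⟩ => hu c' ⟨?_, hxc'⟩⟩
    refine (mem_insert.1 hc').resolve_left ?_
    rintro rfl
    exact disjoint_left.1 hbS hxc' hxS

theorem IsUniformPartition.erase [DecidableEq α] {b : Finset α}
    (hP : IsUniformPartition S d P) (hb : b ∈ P) : IsUniformPartition (S \ b) d (P.erase b) := by
  refine ⟨fun c hc => hP.1 c (mem_of_mem_erase hc), fun c hc x hxc => ?_, fun x hx => ?_⟩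
  · obtain ⟨hcb, hc⟩ := mem_erase.1 hc
    exact mem_sdiff.2 ⟨hP.2.1 c hc hxc, fun hxb => hcb (hP.eq_of_mem hc hb hxc hxb)⟩
  · obtain ⟨hxS, hxb⟩ := mem_sdiff.1 hx
    obtain ⟨c, ⟨hc, hxc⟩, hu⟩ := hP.2.2 x hxS
    have hcb : c ≠ b := fun h => hxb (h ▸ hxc)
    exact ⟨c, ⟨mem_erase.2 ⟨hcb, hc⟩, hxc⟩, fun c' ⟨hc', hxc'⟩ =>
      hu c' ⟨mem_of_mem_erase hc', hxc'⟩⟩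

/-- Relabel the points of a partition along `e` and add the block `b`. -/
def insertBlock [DecidableEq β] (b : Finset β) (e : α ↪ β) (P : Finset (Finset α)) :
    Finset (Finset β) :=
  insert b (mapBlocks e P)

theorem bijOn_insertBlock [DecidableEq β] {b T : Finset β} (hbd : #b = d) (hb : b.Nonempty)
    (hbT : b ⊆ T) (hST : S.map e = T \ b) :
    Set.BijOn (insertBlock b e) {P | IsUniformPartition S d P}
      {Q | IsUniformPartition T d Q ∧ b ∈ Q} := by
  have hnotMem {P} (hP : IsUniformPartition S d P) : b ∉ mapBlocks e P := fun hbP => by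
    obtain ⟨x, hx⟩ := hb
    have := (isUniformPartition_mapBlocks_iff.2 hP).2.1 b hbP hx
    rw [hST] at this
    exact (mem_sdiff.1 this).2 hx
  refine ⟨fun P hP => ⟨?_, mem_insert_self b _⟩, fun P hP P' hP' h => ?_, fun Q ⟨hQ, hbQ⟩ => ?_⟩
  · have := (isUniformPartition_mapBlocks_iff.2 hP).insert hbd (hST ▸ disjoint_sdiff)
    rwa [hST, union_sdiff_of_subset hbT] at this
  · exact (mapBlocks e).injective <| by
      rw [← erase_insert (hnotMem hP), ← erase_insert (hnotMem hP')]
      exact congrArg (erase · b) h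
  · have hQb := hQ.erase hbQ
    rw [← hST] at hQb
    obtain ⟨P, hPQ⟩ := exists_mapBlocks_eq hQb.2.1
    refine ⟨P, isUniformPartition_mapBlocks_iff.1 (hPQ ▸ hQb), ?_⟩
    rw [insertBlock, hPQ, insert_erase hbQ]

end UniformPartition

section Loops

variable {N d : ℕ} {P : Finset (Finset ℕ)}

/-- The set of loops of a family of blocks, without the bounds on the index in `linLoops`. -/
def loops (P : Finset (Finset ℕ)) : Set ℕ :=
  {i | ∃ b ∈ P, i ∈ b ∧ i + 1 ∈ b}

theorem IsLinearDiagram.loops_subset (hP : IsLinearDiagram N d P) : loops P ⊆ Set.Ico 1 N :=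
  fun i ⟨b, hb, hi, hi'⟩ =>
    ⟨(mem_Icc.1 (hP.2.1 b hb i hi)).1, (mem_Icc.1 (hP.2.1 b hb _ hi')).2⟩

theorem IsLinearDiagram.linLoops_eq_ncard (hP : IsLinearDiagram N d P) :
    linLoops N P = (loops P).ncard := by
  refine congrArg Set.ncard (Set.ext fun i => ⟨fun h => h.2.2, fun hi => ?_⟩)
  exact ⟨(hP.loops_subset hi).1, (hP.loops_subset hi).2, hi⟩

theorem loops_insert (b : Finset ℕ) (P : Finset (Finset ℕ)) :
    loops (insert b P) = {i | i ∈ b ∧ i + 1 ∈ b} ∪ loops P := by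
  simp [loops, Set.ext_iff]

/-- The increasing enumeration of the complement of `{p, …, p + k - 1}`: it makes room for `k`
new points in front of the point `p`. -/
def shiftFrom (p k : ℕ) : ℕ ↪ ℕ where
  toFun x := if x < p then x else x + k
  inj' x y h := by grind

theorem shiftFrom_apply (p k x : ℕ) : shiftFrom p k x = if x < p then x else x + k := rfl

theorem shiftFrom_eq_add_one_iff {p k x y : ℕ} (hk : 0 < k) :
    shiftFrom p k y = shiftFrom p k x + 1 ↔ y = x + 1 ∧ y ≠ p := by
  grind [shiftFrom_apply]

theorem loops_mapBlocks_shiftFrom (p : ℕ) {k : ℕ} (hk : 0 < k) (P : Finset (Finset ℕ)) :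
    loops (mapBlocks (shiftFrom p k) P) = shiftFrom p k '' {i ∈ loops P | i + 1 ≠ p} := by
  ext j
  constructor
  · rintro ⟨b, hb, hj, hj'⟩
    obtain ⟨c, hc, rfl⟩ := mem_mapBlocks.1 hb
    obtain ⟨i, hi, rfl⟩ := mem_map.1 hj
    obtain ⟨i', hi', h⟩ := mem_map.1 hj'
    obtain ⟨rfl, hip⟩ := (shiftFrom_eq_add_one_iff hk).1 h
    exact ⟨i, ⟨⟨c, hc, hi, hi'⟩, hip⟩, rfl⟩
  · rintro ⟨i, ⟨⟨c, hc, hi, hi'⟩, hip⟩, rfl⟩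
    refine ⟨c.map (shiftFrom p k), map_mem_mapBlocks.2 hc, mem_map_of_mem _ hi, ?_⟩
    exact (shiftFrom_eq_add_one_iff hk).2 ⟨rfl, hip⟩ ▸ mem_map_of_mem _ hi'

theorem map_shiftFrom_Icc {p : ℕ} (k : ℕ) (hp : p ∈ Icc 1 (N + 1)) :
    (Icc 1 N).map (shiftFrom p k) = Icc 1 (N + k) \ Ico p (p + k) := by
  ext x
  simp only [mem_map, mem_sdiff, mem_Icc, mem_Ico, shiftFrom_apply] at hp ⊢
  constructor
  · grind
  · intro hx
    exact ⟨if x < p then x else x - k, by grind, by grind⟩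

/-- The diagrams on the points `1, …, N` with blocks of size `d` and exactly `k` loops. -/
def diagramsWithLoops (N d k : ℕ) : Set (Finset (Finset ℕ)) :=
  {P | IsLinearDiagram N d P ∧ (loops P).ncard = k}

/-- Pairs of a diagram on the points `1, …, N` and a position `p ∈ {1, …, M}` such that inserting
new points in front of `p` breaks every loop of the diagram. -/
def loopBreakers (N d M : ℕ) : Set (Finset (Finset ℕ) × ℕ) :=
  {q | IsLinearDiagram N d q.1 ∧ q.2 ∈ Icc 1 M ∧ ∀ i ∈ loops q.1, i + 1 = q.2}

theorem numA_eq_ncard (d n k : ℕ) : numA d n k = (diagramsWithLoops (n * d) d k).ncard := by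
  refine congrArg Set.ncard (Set.ext fun P => and_congr_right fun hP => ?_)
  rw [hP.linLoops_eq_ncard]

theorem numA_zero_left (hd : d ≠ 0) (k : ℕ) : numA d 0 k = if k = 0 then 1 else 0 := by
  have hempty : diagramsWithLoops (0 * d) d k = {P | P = ∅ ∧ k = 0} := by
    ext P
    rw [zero_mul]
    refine (and_congr_left fun _ => isUniformPartition_empty_iff hd).trans (and_congr_right ?_)
    rintro rfl
    simp [loops, eq_comm]
  rw [numA_eq_ncard, hempty]
  split_ifs with hk <;> simp [hk]

theorem finite_diagramsWithLoops (N d k : ℕ) : (diagramsWithLoops N d k).Finite :=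
  (finite_setOf_isUniformPartition (Icc 1 N) d).subset fun _ hP => hP.1

theorem IsLinearDiagram.ncard_loops_eq_zero_iff (hP : IsLinearDiagram N d P) :
    (loops P).ncard = 0 ↔ loops P = ∅ :=
  Set.ncard_eq_zero ((Set.finite_Ico 1 N).subset hP.loops_subset)

theorem bijOn_fst_loopBreakers {M : ℕ} (hNM : N ≤ M) :
    Set.BijOn Prod.fst {q ∈ loopBreakers N d M | loops q.1 ≠ ∅} (diagramsWithLoops N d 1) := by
  refine ⟨fun ⟨P, p⟩ ⟨⟨hP, _, hloops⟩, hne⟩ => ⟨hP, ?_⟩, ?_, fun P ⟨hP, hcard⟩ => ?_⟩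
  · obtain ⟨i, hi⟩ := Set.nonempty_iff_ne_empty.2 hne
    refine Set.ncard_eq_one.2 ⟨i, Set.eq_singleton_iff_unique_mem.2 ⟨hi, fun j hj => ?_⟩⟩
    exact Nat.succ_injective ((hloops j hj).trans (hloops i hi).symm)
  · rintro ⟨P, p⟩ ⟨⟨_, _, hp⟩, hne⟩ ⟨_, p'⟩ ⟨⟨_, _, hp'⟩, _⟩ rfl
    obtain ⟨i, hi⟩ := Set.nonempty_iff_ne_empty.2 hne
    exact Prod.ext rfl ((hp i hi).symm.trans (hp' i hi))
  · obtain ⟨i, hi⟩ := Set.ncard_eq_one.1 hcard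
    have hiN : i ∈ Set.Ico 1 N := hP.loops_subset (hi ▸ rfl)
    have hiM : i + 1 ∈ Icc 1 M := mem_Icc.2 ⟨i.succ_pos, Nat.succ_le_of_lt (hiN.2.trans_le hNM)⟩
    exact ⟨(P, i + 1), ⟨⟨hP, hiM, by simp [hi]⟩, by simp [hi]⟩, rfl⟩

theorem ncard_loopBreakers {M : ℕ} (hNM : N ≤ M) :
    (loopBreakers N d M).ncard =
      M * (diagramsWithLoops N d 0).ncard + (diagramsWithLoops N d 1).ncard := by
  have hsplit : loopBreakers N d M = diagramsWithLoops N d 0 ×ˢ (Icc 1 M : Set ℕ) ∪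
      {q ∈ loopBreakers N d M | loops q.1 ≠ ∅} := by
    ext ⟨P, p⟩
    by_cases hloops : loops P = ∅
    · simp [loopBreakers, diagramsWithLoops, hloops]
    · have hD : P ∉ diagramsWithLoops N d 0 := fun ⟨hP, hcard⟩ =>
        hloops (hP.ncard_loops_eq_zero_iff.1 hcard)
      simp [hD, hloops]
  have hbij := bijOn_fst_loopBreakers (d := d) hNM
  have hdisj : Disjoint (diagramsWithLoops N d 0 ×ˢ (Icc 1 M : Set ℕ))
      {q ∈ loopBreakers N d M | loops q.1 ≠ ∅} :=
    Set.disjoint_left.2 fun q ⟨⟨hP, hcard⟩, _⟩ ⟨_, hne⟩ => hne (hP.ncard_loops_eq_zero_iff.1 hcard)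
  rw [hsplit, Set.ncard_union_eq hdisj ((finite_diagramsWithLoops N d 0).prod (finite_toSet _))
    (hbij.finite_iff_finite.2 (finite_diagramsWithLoops N d 1)), Set.ncard_prod, hbij.ncard_eq,
    Set.ncard_coe_finset, Nat.card_Icc, Nat.add_sub_cancel, mul_comm]

end Loops

section Matchings

variable {N p : ℕ} {P : Finset (Finset ℕ)}

/-- Relabel the matching `P` of `{1, …, N}` and join the new last point `N + 2` to a new point
`p`. -/
def insertChord (N p : ℕ) (P : Finset (Finset ℕ)) : Finset (Finset ℕ) :=
  insertBlock {p, N + 2} (shiftFrom p 1) P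

/-- Relabel the matching `P` and join two new consecutive points `p` and `p + 1`. -/
def insertLoop (p : ℕ) (P : Finset (Finset ℕ)) : Finset (Finset ℕ) :=
  insertBlock {p, p + 1} (shiftFrom p 2) P

theorem bijOn_insertChord (hp : p ∈ Icc 1 (N + 1)) :
    Set.BijOn (insertChord N p) {P | IsLinearDiagram N 2 P}
      {Q | IsLinearDiagram (N + 2) 2 Q ∧ {p, N + 2} ∈ Q} := by
  refine bijOn_insertBlock (card_pair ?_) (insert_nonempty _ _) ?_ ?_
  · grind
  · grind
  · rw [map_shiftFrom_Icc 1 hp]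
    grind

theorem bijOn_insertLoop (hp : p ∈ Icc 1 (N + 1)) :
    Set.BijOn (insertLoop p) {P | IsLinearDiagram N 2 P}
      {Q | IsLinearDiagram (N + 2) 2 Q ∧ {p, p + 1} ∈ Q} := by
  refine bijOn_insertBlock (card_pair p.succ_ne_self.symm) (insert_nonempty _ _) ?_ ?_
  · grind
  · rw [map_shiftFrom_Icc 2 hp]
    grind

theorem loops_insertChord (hp : p ≤ N) :
    loops (insertChord N p P) = shiftFrom p 1 '' {i ∈ loops P | i + 1 ≠ p} := by
  have hpair : {i | i ∈ ({p, N + 2} : Finset ℕ) ∧ i + 1 ∈ ({p, N + 2} : Finset ℕ)} = ∅ := by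
    grind
  rw [insertChord, insertBlock, loops_insert, loops_mapBlocks_shiftFrom p one_pos, hpair,
    Set.empty_union]

theorem loops_insertLoop (p : ℕ) (P : Finset (Finset ℕ)) :
    loops (insertLoop p P) = insert p (shiftFrom p 2 '' {i ∈ loops P | i + 1 ≠ p}) := by
  have hpair : {i | i ∈ ({p, p + 1} : Finset ℕ) ∧ i + 1 ∈ ({p, p + 1} : Finset ℕ)} = {p} := by
    grind
  rw [insertLoop, insertBlock, loops_insert, loops_mapBlocks_shiftFrom p two_pos, hpair,
    Set.singleton_union]

theorem loops_insertChord_eq_empty_iff (hp : p ≤ N) :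
    loops (insertChord N p P) = ∅ ↔ ∀ i ∈ loops P, i + 1 = p := by
  rw [loops_insertChord hp, Set.image_eq_empty, Set.sep_eq_empty_iff_mem_false]
  simp only [not_not]

theorem loops_insertLoop_eq_singleton_iff :
    loops (insertLoop p P) = {p} ↔ ∀ i ∈ loops P, i + 1 = p := by
  have hp (i : ℕ) : shiftFrom p 2 i ≠ p := by grind [shiftFrom_apply]
  rw [loops_insertLoop, Set.insert_eq, Set.union_eq_left, Set.image_subset_iff]
  refine forall_congr' fun i => ?_
  simp [hp]

theorem bijOn_insertChord_loopBreakers (N : ℕ) :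
    Set.BijOn (fun q => insertChord N q.2 q.1) (loopBreakers N 2 N)
      (diagramsWithLoops (N + 2) 2 0) := by
  have hbij {p : ℕ} (hp : p ∈ Icc 1 N) := bijOn_insertChord (Icc_subset_Icc_right N.le_succ hp)
  refine ⟨fun ⟨P, p⟩ ⟨hP, hp, hloops⟩ => ⟨((hbij hp).mapsTo hP).1, ?_⟩, ?_, fun Q ⟨hQ, hcard⟩ => ?_⟩
  · rw [(loops_insertChord_eq_empty_iff (mem_Icc.1 hp).2).2 hloops, Set.ncard_empty]
  · rintro ⟨P, p⟩ ⟨hP, hp, _⟩ ⟨P', p'⟩ ⟨hP', hp', _⟩ (h : insertChord N p P = insertChord N p' P')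
    obtain ⟨hQ, hpQ⟩ := (hbij hp).mapsTo hP
    have hpQ' : {p', N + 2} ∈ insertChord N p P := h ▸ ((hbij hp').mapsTo hP').2
    obtain rfl : p = p' := by
      have hpair : ({p, N + 2} : Finset ℕ) = {p', N + 2} :=
        IsUniformPartition.eq_of_mem hQ hpQ hpQ' (x := N + 2) (by simp) (by simp)
      have hmem : p ∈ ({p', N + 2} : Finset ℕ) := hpair ▸ mem_insert_self p _
      grind
    exact Prod.ext ((hbij hp).injOn hP hP' h) rfl
  · have hloops : loops Q = ∅ := hQ.ncard_loops_eq_zero_iff.1 hcard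
    obtain ⟨p, hp, hpN, hpQ⟩ := IsUniformPartition.exists_pair_mem hQ (x := N + 2) (by simp)
    have hne : p ≠ N + 1 := by
      rintro rfl
      have hloop : N + 1 ∈ loops Q := ⟨_, hpQ, by simp, by simp⟩
      exact Set.notMem_empty _ (hloops ▸ hloop)
    have hpIcc : p ∈ Icc 1 N := by grind
    obtain ⟨P, hP, rfl⟩ := (hbij hpIcc).surjOn ⟨hQ, hpQ⟩
    exact ⟨(P, p), ⟨hP, hpIcc, (loops_insertChord_eq_empty_iff (mem_Icc.1 hpIcc).2).1 hloops⟩, rfl⟩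

theorem bijOn_insertLoop_loopBreakers (N : ℕ) :
    Set.BijOn (fun q => insertLoop q.2 q.1) (loopBreakers N 2 (N + 1))
      (diagramsWithLoops (N + 2) 2 1) := by
  refine ⟨fun ⟨P, p⟩ ⟨hP, hp, hloops⟩ => ⟨((bijOn_insertLoop hp).mapsTo hP).1, ?_⟩, ?_,
    fun Q ⟨hQ, hcard⟩ => ?_⟩
  · rw [loops_insertLoop_eq_singleton_iff.2 hloops, Set.ncard_singleton]
  · rintro ⟨P, p⟩ ⟨hP, hp, hloops⟩ ⟨P', p'⟩ ⟨hP', hp', hloops'⟩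
      (h : insertLoop p P = insertLoop p' P')
    obtain rfl : p = p' := Set.singleton_injective <| by
      rw [← loops_insertLoop_eq_singleton_iff.2 hloops, h,
        loops_insertLoop_eq_singleton_iff.2 hloops']
    exact Prod.ext ((bijOn_insertLoop hp).injOn hP hP' h) rfl
  · obtain ⟨p, hloops⟩ := Set.ncard_eq_one.1 hcard
    have hpQ : p ∈ loops Q := hloops ▸ rfl
    have hp : p ∈ Icc 1 (N + 1) := by
      have := hQ.loops_subset hpQ
      grind
    obtain ⟨b, hb, hpb, hpb'⟩ := hpQ
    have hpair : {p, p + 1} ∈ Q := IsUniformPartition.pair_mem hQ hb hpb hpb' p.succ_ne_self.symm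
    obtain ⟨P, hP, rfl⟩ := (bijOn_insertLoop hp).surjOn ⟨hQ, hpair⟩
    exact ⟨(P, p), ⟨hP, hp, loops_insertLoop_eq_singleton_iff.1 hloops⟩, rfl⟩

theorem numA_two_succ_zero (n : ℕ) :
    numA 2 (n + 1) 0 = 2 * n * numA 2 n 0 + numA 2 n 1 := by
  simp only [numA_eq_ncard, add_mul, one_mul]
  rw [← (bijOn_insertChord_loopBreakers (n * 2)).ncard_eq, ncard_loopBreakers le_rfl, mul_comm 2 n]

theorem numA_two_succ_one (n : ℕ) :
    numA 2 (n + 1) 1 = (2 * n + 1) * numA 2 n 0 + numA 2 n 1 := by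
  simp only [numA_eq_ncard, add_mul _ _ 2, one_mul]
  rw [← (bijOn_insertLoop_loopBreakers (n * 2)).ncard_eq, ncard_loopBreakers (Nat.le_succ _),
    mul_comm 2 n]

end Matchings

/-- for `d = 2`, the second-order recurrence
`a(n+1,0) = (2n+1)·a(n,0) + a(n−1,0)` for `n ≥ 1`, with `a(0,0) = 1`, `a(1,0) = 0`. -/
theorem linear_second_order_rec :
    (∀ n : ℕ, 1 ≤ n →
        numA 2 (n + 1) 0 = (2 * n + 1) * numA 2 n 0 + numA 2 (n - 1) 0) ∧
      numA 2 0 0 = 1 ∧ numA 2 1 0 = 0 := by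
  have hzero (k : ℕ) : numA 2 0 k = if k = 0 then 1 else 0 := numA_zero_left two_ne_zero k
  refine ⟨fun n hn => ?_, hzero 0, ?_⟩
  · obtain ⟨m, rfl⟩ := Nat.exists_eq_add_of_le' hn
    have hone : numA 2 (m + 1) 1 = numA 2 (m + 1) 0 + numA 2 m 0 := by
      rw [numA_two_succ_one, numA_two_succ_zero m]
      ring
    rw [numA_two_succ_zero, hone, Nat.add_sub_cancel]
    ring
  · simp [numA_two_succ_zero 0, hzero]
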